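/- Let d ≥ 3 and let G be a d-regular graph on n vertices that is bicycle-free at radius r. Then the total number of singleton-free (k−1)-hikes in G is at most (2^{γ₁}·√(d−1))^{2k}, where γ₁ = 1 + log₂(nrk)/(2k) + log₂(rk)/r. -/

import Mathlib

open scoped Classical

noncomputable section

/-- The ball of radius `r` about `v` in `G` (within the connected component of `v`). -/
def gBall {V : Type*} (G : SimpleGraph V) (v : V) (r : ℕ) : Set V :=
  {u | G.Reachable v u ∧ G.dist v u ≤ r}

/-- `G` is bicycle-free at radius `r`: the subgraph induced on every ball of radius `r`
has at most as many edges as vertices. -/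
def BicycleFree {V : Type*} (G : SimpleGraph V) (r : ℕ) : Prop :=
  ∀ v : V,
    (G.edgeSet ∩ {e : Sym2 V | ∀ x ∈ e, x ∈ gBall G v r}).ncard ≤ (gBall G v r).ncard

/-- A `k`-hike in `G`: a closed walk `v₀, …, v_{2k}` with `v₀ = v_{2k}` in which every
step except possibly the `(k+1)`-st is non-backtracking. -/
def IsHike {V : Type*} (G : SimpleGraph V) (k : ℕ) (f : Fin (2 * k + 1) → V) : Prop :=
  (∀ (i : ℕ) (h : i < 2 * k), G.Adj (f ⟨i, by omega⟩) (f ⟨i + 1, by omega⟩)) ∧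
  f ⟨2 * k, by omega⟩ = f ⟨0, by omega⟩ ∧
  ∀ (i : ℕ) (h1 : 1 ≤ i) (h2 : i < 2 * k), i ≠ k → f ⟨i + 1, by omega⟩ ≠ f ⟨i - 1, by omega⟩

/-- The number of steps of the closed walk `f` traversing the undirected edge `e`. -/
def edgeCount {V : Type*} [DecidableEq V] (k : ℕ) (f : Fin (2 * k + 1) → V)
    (e : Sym2 V) : ℕ :=
  (Finset.univ.filter fun i : Fin (2 * k) =>
    s(f ⟨i.1, Nat.lt_succ_of_lt i.2⟩, f ⟨i.1 + 1, Nat.succ_lt_succ i.2⟩) = e).card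

/-- A hike is singleton-free if no edge is traversed exactly once. -/
def IsSingletonFree {V : Type*} [DecidableEq V] (k : ℕ) (f : Fin (2 * k + 1) → V) : Prop :=
  ∀ e : Sym2 V, edgeCount k f e ≠ 1

/-!
Call a step of a walk fresh if it traverses an edge for the first time, and stale otherwise. A
singleton-free walk of length `2K` has at most `K` fresh steps, and there are at most `4 ^ K`
choices for the set of fresh times. Once that set is fixed, the walk is revealed in windows of
length at most `r`, on each of which it is non-backtracking. A fresh step extends a prefix in at
most `d - 1` ways (in `d` ways for the first step). Inside a window the walk stays in a ball of
radius `r`, which is a tree plus at most one edge. Its last stale step in the window leads to a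
vertex visited before, whose first visit was at time `0` or right after a fresh step, hence at one
of `K + 1` possible times; given that time, the tree-plus-edge structure leaves only two
possibilities for the walk up to there, and just one if `r = 1`. So a window costs a factor
`(K + 1) * min 2 r`, besides the factors `d - 1` of its fresh steps.
-/

section Counting

variable {α β γ : Type*}

lemma encard_image_le_encard_image {A : Set α} {φ : α → β} {ψ : α → γ}
    (h : ∀ f ∈ A, ∀ g ∈ A, φ f = φ g → ψ f = ψ g) : (ψ '' A).encard ≤ (φ '' A).encard := by
  obtain ⟨B, hBA, hB⟩ := Set.exists_subset_bijOn A ψ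
  have hφ : Set.InjOn φ B := fun f hf g hg hfg ↦ hB.injOn hf hg (h f (hBA hf) g (hBA hg) hfg)
  calc (ψ '' A).encard = B.encard := by rw [← hB.image_eq, hB.injOn.encard_image]
    _ = (φ '' B).encard := hφ.encard_image.symm
    _ ≤ (φ '' A).encard := Set.encard_le_encard (Set.image_mono hBA)

lemma encard_image_le_two {A : Set α} {ψ : α → γ} (P : α → Prop)
    (h : ∀ f ∈ A, ∀ g ∈ A, (P f ↔ P g) → ψ f = ψ g) : (ψ '' A).encard ≤ 2 :=
  calc (ψ '' A).encard ≤ (P '' A).encard :=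
        encard_image_le_encard_image fun f hf g hg hfg ↦ h f hf g hg (iff_of_eq hfg)
    _ ≤ ENat.card Prop := Set.encard_le_card
    _ = 2 := by simp

lemma card_image_le_card_image_mul [DecidableEq β] [DecidableEq γ] {S : Finset α} {φ : α → β}
    {ψ : α → γ} {M : ℕ}
    (h : ∀ f₀ ∈ S, ((S.filter fun f ↦ φ f = φ f₀).image ψ).card ≤ M) :
    (S.image ψ).card ≤ (S.image φ).card * M := by
  have hcover : S.image ψ ⊆ (S.image φ).biUnion fun c ↦ (S.filter fun f ↦ φ f = c).image ψ := by
    intro p hp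
    obtain ⟨f, hf, rfl⟩ := Finset.mem_image.1 hp
    exact Finset.mem_biUnion.2 ⟨φ f, Finset.mem_image_of_mem φ hf,
      Finset.mem_image_of_mem ψ (Finset.mem_filter.2 ⟨hf, rfl⟩)⟩
  refine (Finset.card_le_card hcover).trans (Finset.card_biUnion_le_card_mul _ _ _ fun c hc ↦ ?_)
  obtain ⟨f₀, hf₀, rfl⟩ := Finset.mem_image.1 hc
  exact h f₀ hf₀

lemma card_inter_Ico_add_card_inter_Ico (F : Finset ℕ) {a b c : ℕ} (hac : a ≤ c) (hcb : c ≤ b) :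
    (F ∩ Finset.Ico a c).card + (F ∩ Finset.Ico c b).card = (F ∩ Finset.Ico a b).card := by
  rw [← Finset.Ico_union_Ico_eq_Ico hac hcb, Finset.inter_union_distrib_left,
    Finset.card_union_of_disjoint]
  exact (Finset.Ico_disjoint_Ico_consecutive a c b).mono Finset.inter_subset_right
    Finset.inter_subset_right

end Counting

/-- The sequence `f`, read on the times `a, …, b`, is a non-backtracking walk in `G`. Walks are
encoded as functions on all of `ℕ` so that prefixes and windows need no reindexing. -/
structure IsNonbacktrackingOn {V : Type*} (G : SimpleGraph V) (a b : ℕ) (f : ℕ → V) : Prop where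
  adj : ∀ i, a ≤ i → i < b → G.Adj (f i) (f (i + 1))
  ne : ∀ i, a ≤ i → i + 2 ≤ b → f (i + 2) ≠ f i

namespace IsNonbacktrackingOn

variable {V : Type*} {G : SimpleGraph V} {a b a' b' : ℕ} {f : ℕ → V}

lemma mono (h : IsNonbacktrackingOn G a b f) (ha : a ≤ a') (hb : b' ≤ b) :
    IsNonbacktrackingOn G a' b' f :=
  ⟨fun i hi hi' ↦ h.adj i (by omega) (by omega), fun i hi hi' ↦ h.ne i (by omega) (by omega)⟩

end IsNonbacktrackingOn

section Tree

variable {V : Type*} {T : SimpleGraph V} {a b : ℕ} {f g : ℕ → V}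

lemma eq_of_adj_of_dist_eq_add_one (hT : T.IsTree) {u v v' w : V} (hv : T.Adj v w)
    (hv' : T.Adj v' w) (hd : T.dist u w = T.dist u v + 1) (hd' : T.dist u w = T.dist u v' + 1) :
    v = v' := by
  have exists_path : ∀ z, ∀ hz : T.Adj z w, T.dist u w = T.dist u z + 1 →
      ∃ p : T.Walk u z, (p.concat hz).IsPath := fun z hz hdz ↦ by
    obtain ⟨p, -, hp⟩ := hT.connected.exists_path_of_dist u z
    exact ⟨p, SimpleGraph.Walk.isPath_of_length_eq_dist _
      (by rw [SimpleGraph.Walk.length_concat, hp, hdz])⟩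
  obtain ⟨p, hp⟩ := exists_path v hv hd
  obtain ⟨p', hp'⟩ := exists_path v' hv' hd'
  have heq : p.concat hv = p'.concat hv' :=
    congrArg Subtype.val ((hT.isAcyclic.subsingleton_path u w).elim ⟨_, hp⟩ ⟨_, hp'⟩)
  simpa using congrArg SimpleGraph.Walk.penultimate heq

lemma IsNonbacktrackingOn.add_dist_eq (hT : T.IsTree) (hab : a ≤ b)
    (h : IsNonbacktrackingOn T a b f) : a + T.dist (f a) (f b) = b := by
  obtain ⟨m, rfl⟩ := Nat.exists_eq_add_of_le hab
  clear hab
  congr 1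
  induction m using Nat.twoStepInduction with
  | zero => exact SimpleGraph.dist_self
  | one => exact SimpleGraph.dist_eq_one_iff_adj.2 (h.adj a le_rfl (by omega))
  | more m ih ih' =>
    have hm := ih (h.mono le_rfl (by omega))
    have hm' := ih' (h.mono le_rfl (by omega))
    have hadj := h.adj (a + (m + 1)) (by omega) (by omega)
    rcases hT.dist_eq_dist_add_one_of_adj (f a) hadj with hd | hd
    · refine absurd ?_ (h.ne (a + m) (by omega) (by omega))
      exact eq_of_adj_of_dist_eq_add_one hT hadj.symm (h.adj (a + m) (by omega) (by omega)) hd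
        (hm'.trans (by rw [hm]))
    · exact hd.trans (by rw [hm'])

lemma IsNonbacktrackingOn.eqOn (hT : T.IsTree) (hf : IsNonbacktrackingOn T a b f)
    (hg : IsNonbacktrackingOn T a b g) (ha : f a = g a) (hb : f b = g b) :
    Set.EqOn f g (Set.Icc a b) := by
  rintro i ⟨hai, hib⟩
  induction hib using Nat.decreasingInduction with
  | self => exact hb
  | of_succ j hjb ih =>
    have hstep : f (j + 1) = g (j + 1) := ih (by omega)
    have hfd : a + T.dist (f a) (f (j + 1)) = j + 1 :=
      (hf.mono le_rfl hjb).add_dist_eq hT (by omega)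
    have hfd' := (hf.mono le_rfl hjb.le).add_dist_eq hT hai
    have hgd' := (hg.mono le_rfl hjb.le).add_dist_eq hT hai
    rw [← ha] at hgd'
    exact eq_of_adj_of_dist_eq_add_one (u := f a) hT (hf.adj j hai hjb)
      (hstep ▸ hg.adj j hai hjb) (by omega) (by omega)

end Tree

/-- Some step of `f` between the times `a` and `b` is not an edge of `T`. -/
def LeavesOn {V : Type*} (T : SimpleGraph V) (a b : ℕ) (f : ℕ → V) : Prop :=
  ∃ j, a ≤ j ∧ j < b ∧ ¬ T.Adj (f j) (f (j + 1))

lemma LeavesOn.mono_left {V : Type*} {T : SimpleGraph V} {a s b : ℕ} {f : ℕ → V} (has : a ≤ s)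
    (h : LeavesOn T s b f) : LeavesOn T a b f :=
  let ⟨j, hsj, hj⟩ := h
  ⟨j, has.trans hsj, hj⟩

/-- On the times `a, …, b` the sequence `f` is a non-backtracking walk in the graph `T` with an
added edge `xy`, which it only ever crosses from `x` to `y`. A crossing is recorded as a step that
is not an edge of `T`. -/
structure IsOneWayOn {V : Type*} (T : SimpleGraph V) (x y : V) (a b : ℕ) (f : ℕ → V) : Prop where
  cross : ∀ i, a ≤ i → i < b → ¬ T.Adj (f i) (f (i + 1)) → f i = x ∧ f (i + 1) = y
  ne : ∀ i, a ≤ i → i + 2 ≤ b → f (i + 2) ≠ f i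

namespace IsOneWayOn

variable {V : Type*} {T : SimpleGraph V} {x y : V} {a b : ℕ} {f g : ℕ → V}

lemma mono {a' b' : ℕ} (h : IsOneWayOn T x y a b f) (ha : a ≤ a') (hb : b' ≤ b) :
    IsOneWayOn T x y a' b' f :=
  ⟨fun i hi hi' ↦ h.cross i (by omega) (by omega), fun i hi hi' ↦ h.ne i (by omega) (by omega)⟩

lemma exists_first_crossing (hT : T.IsTree) (h : IsOneWayOn T x y a b f)
    (hleave : LeavesOn T a b f) :
    ∃ i < b, a + T.dist (f a) x = i ∧ f i = x ∧ f (i + 1) = y ∧ IsNonbacktrackingOn T a i f := by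
  obtain ⟨i, ⟨hai, hib, hi⟩, hmin⟩ : ∃ i, (a ≤ i ∧ i < b ∧ ¬ T.Adj (f i) (f (i + 1))) ∧
      ∀ l < i, ¬ (a ≤ l ∧ l < b ∧ ¬ T.Adj (f l) (f (l + 1))) :=
    ⟨Nat.find hleave, Nat.find_spec hleave, fun _ ↦ Nat.find_min hleave⟩
  obtain ⟨hx, hy⟩ := h.cross i hai hib hi
  have htree : IsNonbacktrackingOn T a i f :=
    ⟨fun l hl hli ↦ by_contra fun hl' ↦ hmin l hli ⟨hl, by omega, hl'⟩,
      fun l hl hli ↦ h.ne l hl (by omega)⟩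
  exact ⟨i, hib, hx ▸ htree.add_dist_eq hT hai, hx, hy, htree⟩

lemma exists_last_crossing (hT : T.IsTree) (h : IsOneWayOn T x y a b f)
    (hleave : LeavesOn T a b f) :
    ∃ i, a ≤ i ∧ i + 1 + T.dist y (f b) = b ∧ ¬ T.Adj (f i) (f (i + 1)) ∧ f i = x ∧
      f (i + 1) = y ∧ IsNonbacktrackingOn T (i + 1) b f := by
  obtain ⟨j, haj, hjb, hj⟩ := hleave
  obtain ⟨i, ⟨hib, hi⟩, hmax⟩ : ∃ i, (i < b ∧ ¬ T.Adj (f i) (f (i + 1))) ∧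
      ∀ l, l < b → ¬ T.Adj (f l) (f (l + 1)) → l ≤ i :=
    ⟨_, Nat.findGreatest_spec (P := fun l ↦ l < b ∧ ¬ T.Adj (f l) (f (l + 1))) hjb.le ⟨hjb, hj⟩,
      fun l hl hl' ↦ Nat.le_findGreatest hl.le ⟨hl, hl'⟩⟩
  have hai : a ≤ i := haj.trans (hmax j hjb hj)
  obtain ⟨hx, hy⟩ := h.cross i hai hib hi
  have htree : IsNonbacktrackingOn T (i + 1) b f :=
    ⟨fun l hl hlb ↦ by_contra fun hl' ↦ (hmax l hlb hl').not_gt hl,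
      fun l hl hlb ↦ h.ne l (by omega) hlb⟩
  exact ⟨i, hai, hy ▸ htree.add_dist_eq hT hib, hi, hx, hy, htree⟩

lemma add_dist_add_dist_le (hT : T.IsTree) (h : IsOneWayOn T x y a b f)
    (hleave : LeavesOn T a b f) : a + T.dist (f a) x + 1 + T.dist y (f b) ≤ b := by
  obtain ⟨i, hai, hi, hout, -⟩ := h.exists_last_crossing hT hleave
  obtain ⟨i', hi'i, hi', -⟩ := (h.mono le_rfl (by omega : i + 1 ≤ b)).exists_first_crossing hT
    ⟨i, hai, by omega, hout⟩
  omega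

lemma add_dist_lt_of_opposite (hT : T.IsTree) (hf : IsOneWayOn T x y a b f)
    (hg : IsOneWayOn T y x a b g) (hfl : LeavesOn T a b f) (hgl : LeavesOn T a b g)
    (ha : f a = g a) (hb : f b = g b) : a + T.dist (f a) (f b) < b := by
  have hlen := hf.add_dist_add_dist_le hT hfl
  have hlen' := hg.add_dist_add_dist_le hT hgl
  rw [← ha, ← hb] at hlen'
  have hx := hT.connected.dist_triangle (u := f a) (v := x) (w := f b)
  have hy := hT.connected.dist_triangle (u := f a) (v := y) (w := f b)
  omega

-- The time and place of the next crossing are determined by the current vertex.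
lemma eq_of_leavesOn {s : ℕ} (hT : T.IsTree) (hf : IsOneWayOn T x y a b f)
    (hg : IsOneWayOn T x y a b g) (ha : f a = g a) (has : a ≤ s) (hfl : LeavesOn T s b f)
    (hgl : LeavesOn T s b g) : f s = g s := by
  induction s, has using Nat.le_induction with
  | base => exact ha
  | succ s has ih =>
    replace hfl := hfl.mono_left s.le_succ
    replace hgl := hgl.mono_left s.le_succ
    have hs : f s = g s := ih hfl hgl
    obtain ⟨i, -, hi, hfx, hfy, hft⟩ := (hf.mono has le_rfl).exists_first_crossing hT hfl
    obtain ⟨i', -, hi', hgx, hgy, hgt⟩ := (hg.mono has le_rfl).exists_first_crossing hT hgl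
    obtain rfl : i = i' := by rw [← hi, ← hi', hs]
    rcases (show s = i ∨ s + 1 ≤ i by omega) with rfl | hsi
    · rw [hfy, hgy]
    · exact hft.eqOn hT hgt hs (hfx.trans hgx.symm) ⟨by omega, hsi⟩

lemma eqOn (hT : T.IsTree) (hf : IsOneWayOn T x y a b f) (hg : IsOneWayOn T x y a b g)
    (ha : f a = g a) (hb : f b = g b) (hfl : LeavesOn T a b f) (hgl : LeavesOn T a b g) :
    Set.EqOn f g (Set.Icc a b) := by
  obtain ⟨i, -, hi, hfi, -, hfy, hft⟩ := hf.exists_last_crossing hT hfl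
  obtain ⟨i', -, hi', hgi, -, hgy, hgt⟩ := hg.exists_last_crossing hT hgl
  obtain rfl : i = i' := by rw [← hb] at hi'; omega
  rintro s ⟨has, hsb⟩
  rcases Nat.lt_or_ge i s with his | hsi
  · exact hft.eqOn hT hgt (hfy.trans hgy.symm) hb ⟨his, hsb⟩
  · exact hf.eq_of_leavesOn hT hg ha has ⟨i, hsi, by omega, hfi⟩ ⟨i, hsi, by omega, hgi⟩

-- A crossing `y → x` cannot follow a crossing `x → y`: between two consecutive ones the walk would
-- be closed and non-backtracking in `T`, hence of length zero, and the second would backtrack.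
lemma succ (hT : T.IsTree) (h : IsOneWayOn T x y a b f)
    (hne : ∀ i, a ≤ i → i + 2 ≤ b + 1 → f (i + 2) ≠ f i)
    (hb : (T ⊔ SimpleGraph.edge x y).Adj (f b) (f (b + 1))) :
    IsOneWayOn T x y a (b + 1) f ∨ IsOneWayOn T y x a (b + 1) f := by
  have extend : ∀ {x' y'}, IsOneWayOn T x' y' a b f →
      (¬ T.Adj (f b) (f (b + 1)) → f b = x' ∧ f (b + 1) = y') →
      IsOneWayOn T x' y' a (b + 1) f := fun h' hb' ↦
    ⟨fun i hai hib hi ↦ by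
      rcases Nat.lt_succ_iff_lt_or_eq.1 hib with hib | rfl
      exacts [h'.cross i hai hib hi, hb' hi], hne⟩
  rw [SimpleGraph.sup_adj, SimpleGraph.edge_adj] at hb
  rcases hb with hb | ⟨hb | hb, -⟩
  · exact .inl (extend h (absurd hb))
  · exact .inl (extend h fun _ ↦ hb)
  · refine .inr (extend ⟨fun j haj hjb hj ↦ ?_, h.ne⟩ fun _ ↦ hb)
    obtain ⟨i, hai, hi, -, hx, -⟩ := h.exists_last_crossing hT ⟨j, haj, hjb, hj⟩
    obtain rfl : i + 1 = b := by rwa [hb.1, SimpleGraph.dist_self, add_zero] at hi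
    exact absurd (hb.2.trans hx.symm) (hne i hai le_rfl)

end IsOneWayOn

section Unicyclic

variable {V : Type*} {T H : SimpleGraph V} {x y : V} {a b : ℕ} {f g : ℕ → V}

lemma IsNonbacktrackingOn.of_not_leavesOn (h : IsNonbacktrackingOn H a b f)
    (hstay : ¬ LeavesOn T a b f) : IsNonbacktrackingOn T a b f :=
  ⟨fun i hai hib ↦ by_contra fun hi ↦ hstay ⟨i, hai, hib, hi⟩, h.ne⟩

lemma IsNonbacktrackingOn.isOneWayOn_or (hT : T.IsTree) (hH : H ≤ T ⊔ SimpleGraph.edge x y)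
    (h : IsNonbacktrackingOn H a b f) : IsOneWayOn T x y a b f ∨ IsOneWayOn T y x a b f := by
  induction b with
  | zero => exact .inl ⟨fun i _ hi ↦ by omega, h.ne⟩
  | succ b ih =>
    rcases Nat.lt_or_ge b a with hba | hab
    · exact .inl ⟨fun i hi hi' ↦ by omega, h.ne⟩
    have hb := hH (h.adj b hab (by omega))
    rcases ih (h.mono le_rfl (by omega)) with h' | h'
    · exact h'.succ hT h.ne hb
    · exact (h'.succ hT h.ne (SimpleGraph.edge_comm x y ▸ hb)).symm

lemma IsNonbacktrackingOn.exists_isOneWayOn (hT : T.IsTree) (hH : H ≤ T ⊔ SimpleGraph.edge x y)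
    (hf : IsNonbacktrackingOn H a b f) (hg : IsNonbacktrackingOn H a b g)
    (hfg : IsOneWayOn T x y a b f ↔ IsOneWayOn T x y a b g) :
    ∃ x' y', IsOneWayOn T x' y' a b f ∧ IsOneWayOn T x' y' a b g := by
  by_cases hxy : IsOneWayOn T x y a b f
  · exact ⟨x, y, hxy, hfg.1 hxy⟩
  · exact ⟨y, x, (hf.isOneWayOn_or hT hH).resolve_left hxy,
      (hg.isOneWayOn_or hT hH).resolve_left fun h ↦ hxy (hfg.2 h)⟩

-- A walk between fixed endpoints stays in `T`, crosses `x → y` or crosses `y → x`. It is determined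
-- by its type, and its length leaves room for only two of the three types.
lemma encard_nonbacktracking_between_le_two (hT : T.IsTree) (hH : H ≤ T ⊔ SimpleGraph.edge x y)
    (hab : a ≤ b) (u v : V) :
    ((Set.Icc a b).domRestrict ''
      {f | IsNonbacktrackingOn H a b f ∧ f a = u ∧ f b = v}).encard ≤ 2 := by
  by_cases hd : a + T.dist u v = b
  · refine encard_image_le_two (LeavesOn T a b) ?_
    rintro f ⟨hf, rfl, rfl⟩ g ⟨hg, hga, hgb⟩ hfg
    rw [Set.domRestrict_eq_domRestrict_iff]
    by_cases hfl : LeavesOn T a b f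
    · have hgl := hfg.1 hfl
      rcases hf.isOneWayOn_or hT hH with hf | hf <;> rcases hg.isOneWayOn_or hT hH with hg | hg
      · exact hf.eqOn hT hg hga.symm hgb.symm hfl hgl
      · exact absurd hd (hf.add_dist_lt_of_opposite hT hg hfl hgl hga.symm hgb.symm).ne
      · exact absurd hd (hf.add_dist_lt_of_opposite hT hg hfl hgl hga.symm hgb.symm).ne
      · exact hf.eqOn hT hg hga.symm hgb.symm hfl hgl
    · exact (hf.of_not_leavesOn hfl).eqOn hT (hg.of_not_leavesOn fun hgl ↦ hfl (hfg.2 hgl))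
        hga.symm hgb.symm
  · have leaves : ∀ f, IsNonbacktrackingOn H a b f → f a = u → f b = v → LeavesOn T a b f :=
      fun f hf ha hb ↦ by_contra fun hstay ↦
        hd (ha ▸ hb ▸ (hf.of_not_leavesOn hstay).add_dist_eq hT hab)
    refine encard_image_le_two (IsOneWayOn T x y a b) ?_
    rintro f ⟨hf, hfa, hfb⟩ g ⟨hg, hga, hgb⟩ hfg
    rw [Set.domRestrict_eq_domRestrict_iff]
    obtain ⟨x', y', hf', hg'⟩ := hf.exists_isOneWayOn hT hH hg hfg
    exact hf'.eqOn hT hg' (hfa.trans hga.symm) (hfb.trans hgb.symm) (leaves f hf hfa hfb)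
      (leaves g hg hga hgb)

-- Such a walk closes up after time `s`, so it crosses `xy` then; up to its last crossing it is
-- determined by the direction.
lemma encard_nonbacktracking_returning_le_two {s : ℕ} (hT : T.IsTree)
    (hH : H ≤ T ⊔ SimpleGraph.edge x y) (has : a ≤ s) (hsb : s < b) (u : V) :
    ((Set.Icc a b).domRestrict ''
      {f | IsNonbacktrackingOn H a b f ∧ f a = u ∧ f s = f b}).encard ≤ 2 := by
  have leaves : ∀ f, IsNonbacktrackingOn H a b f → f s = f b → LeavesOn T s b f := by
    refine fun f hf hs ↦ by_contra fun hstay ↦ ?_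
    have hlen := ((hf.mono has le_rfl).of_not_leavesOn hstay).add_dist_eq hT hsb.le
    rw [hs, SimpleGraph.dist_self] at hlen
    omega
  refine encard_image_le_two (IsOneWayOn T x y a b) ?_
  rintro f ⟨hf, hfa, hfs⟩ g ⟨hg, hga, hgs⟩ hfg
  rw [Set.domRestrict_eq_domRestrict_iff]
  obtain ⟨x', y', hf', hg'⟩ := hf.exists_isOneWayOn hT hH hg hfg
  have hs : f s = g s :=
    hf'.eq_of_leavesOn hT hg' (hfa.trans hga.symm) has (leaves f hf hfs) (leaves g hg hgs)
  exact hf'.eqOn hT hg' (hfa.trans hga.symm) (hfs ▸ hgs ▸ hs) ((leaves f hf hfs).mono_left has)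
    ((leaves g hg hgs).mono_left has)

end Unicyclic

section Ball

variable {V : Type*} {G : SimpleGraph V} {a b r : ℕ} {f : ℕ → V}

lemma exists_isTree_le_sup_edge [Finite V] (hG : G.Connected)
    (hcard : G.edgeSet.ncard ≤ Nat.card V) :
    ∃ T : SimpleGraph V, T.IsTree ∧ ∃ x y, G ≤ T ⊔ SimpleGraph.edge x y := by
  obtain ⟨T, hTG, hT⟩ := hG.exists_isTree_le
  refine ⟨T, hT, ?_⟩
  have hTcard : T.edgeSet.ncard + 1 = Nat.card V :=
    (SimpleGraph.isTree_iff_connected_and_card.1 hT).2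
  have hextra : (G.edgeSet \ T.edgeSet).ncard ≤ 1 := by
    rw [Set.ncard_sdiff (SimpleGraph.edgeSet_mono hTG) (Set.toFinite _)]
    omega
  rcases Set.eq_empty_or_nonempty (G.edgeSet \ T.edgeSet) with hempty | ⟨e, he⟩
  · have x := hG.nonempty.some
    have hGT : G ≤ T := SimpleGraph.edgeSet_subset_edgeSet.1 (Set.sdiff_eq_empty.1 hempty)
    exact ⟨x, x, hGT.trans le_sup_left⟩
  · induction e with | _ x y
    refine ⟨x, y, fun v w hvw ↦ ?_⟩
    rw [SimpleGraph.sup_adj, SimpleGraph.edge_adj]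
    refine or_iff_not_imp_left.2 fun hT' ↦ ⟨Sym2.eq_iff.1 ?_, hvw.ne⟩
    exact (Set.ncard_le_one (Set.toFinite _)).1 hextra s(v, w) ⟨hvw, hT'⟩ s(x, y) he

lemma connected_induce_gBall (G : SimpleGraph V) (u : V) (r : ℕ) :
    (G.induce (gBall G u r)).Connected := by
  refine SimpleGraph.induce_connected_of_patches u
    ⟨SimpleGraph.Reachable.refl u, by simp⟩ fun {w} hw ↦ ?_
  obtain ⟨p, hp⟩ := hw.1.exists_walk_length_eq_dist
  have hsupp : {z | z ∈ p.support} ⊆ gBall G u r := fun z hz ↦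
    ⟨⟨p.takeUntil z hz⟩, (SimpleGraph.dist_le _).trans
      ((p.length_takeUntil_le_length hz).trans (hp.trans_le hw.2))⟩
  exact ⟨_, hsupp, p.start_mem_support, p.end_mem_support, p.connected_induce_support _ _⟩

lemma BicycleFree.exists_isTree_gBall [Finite V] (hG : BicycleFree G r) (u : V) :
    ∃ T : SimpleGraph (gBall G u r), T.IsTree ∧
      ∃ x y, G.induce (gBall G u r) ≤ T ⊔ SimpleGraph.edge x y := by
  refine exists_isTree_le_sup_edge (connected_induce_gBall G u r) ?_
  refine (Set.ncard_le_ncard_of_injOn (Sym2.map Subtype.val) (fun e he ↦ ?_)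
    (Sym2.map.injective Subtype.val_injective).injOn (Set.toFinite _)).trans (hG u)
  induction e with | _ v w
  refine ⟨by simpa using he, fun z hz ↦ ?_⟩
  obtain ⟨z, -, rfl⟩ := Sym2.mem_map.1 hz
  exact z.2

lemma IsNonbacktrackingOn.mem_gBall (h : IsNonbacktrackingOn G a b f) (hb : b ≤ a + r) {i : ℕ}
    (hi : i ∈ Set.Icc a b) : f i ∈ gBall G (f a) r := by
  obtain ⟨p, hp⟩ : ∃ p : G.Walk (f a) (f i), a + p.length = i := by
    obtain ⟨hai, hib⟩ := hi
    induction i, hai using Nat.le_induction with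
    | base => exact ⟨.nil, rfl⟩
    | succ i hai ih =>
      obtain ⟨p, hp⟩ := ih (by omega)
      exact ⟨p.concat (h.adj i hai hib), by rw [SimpleGraph.Walk.length_concat]; omega⟩
  exact ⟨⟨p⟩, (SimpleGraph.dist_le p).trans (by have := hi.2; omega)⟩

lemma IsNonbacktrackingOn.comp_retraction {B : Set V} {ρ : V → B}
    (hρ : Function.LeftInverse ρ Subtype.val) (h : IsNonbacktrackingOn G a b f)
    (hB : ∀ i ∈ Set.Icc a b, f i ∈ B) : IsNonbacktrackingOn (G.induce B) a b (ρ ∘ f) := by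
  have val_ρ : ∀ i, a ≤ i → i ≤ b → (ρ (f i) : V) = f i := fun i hai hib ↦
    congrArg Subtype.val (hρ ⟨f i, hB i ⟨hai, hib⟩⟩)
  refine ⟨fun i hai hib ↦ ?_, fun i hai hib heq ↦ h.ne i hai hib ?_⟩
  · rw [SimpleGraph.induce_adj]
    simpa only [Function.comp_apply, val_ρ i hai hib.le, val_ρ (i + 1) (by omega) hib]
      using h.adj i hai hib
  · rw [← val_ρ i hai (by omega), ← val_ρ (i + 2) (by omega) hib]
    exact congrArg Subtype.val heq

lemma encard_domRestrict_le_of_retraction {ι : Type*} {B : Set V} {ρ : V → B}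
    (hρ : Function.LeftInverse ρ Subtype.val) {I : Set ι} {A : Set (ι → V)} {A' : Set (ι → B)}
    (hB : ∀ f ∈ A, ∀ i ∈ I, f i ∈ B) (hA : ∀ f ∈ A, ρ ∘ f ∈ A') :
    (I.domRestrict '' A).encard ≤ (I.domRestrict '' A').encard := by
  refine (encard_image_le_encard_image (φ := fun f ↦ I.domRestrict (ρ ∘ f)) ?_).trans
    (Set.encard_le_encard ?_)
  · intro f hf g hg hfg
    rw [Set.domRestrict_eq_domRestrict_iff] at hfg ⊢
    intro i hi
    simpa only [Function.comp_apply, hρ ⟨f i, hB f hf i hi⟩, hρ ⟨g i, hB g hg i hi⟩] using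
      congrArg Subtype.val (hfg hi)
  · rintro _ ⟨f, hf, rfl⟩
    exact Set.mem_image_of_mem _ (hA f hf)

lemma BicycleFree.encard_nonbacktracking_between_le_two [Finite V] (hG : BicycleFree G r)
    (hab : a ≤ b) (hb : b ≤ a + r) (u v : V) :
    ((Set.Icc a b).domRestrict ''
      {f | IsNonbacktrackingOn G a b f ∧ f a = u ∧ f b = v}).encard ≤ 2 := by
  obtain ⟨T, hT, x, y, hxy⟩ := hG.exists_isTree_gBall u
  have := (connected_induce_gBall G u r).nonempty
  obtain ⟨ρ, hρ⟩ := (Subtype.val_injective (p := (· ∈ gBall G u r))).hasLeftInverse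
  refine (encard_domRestrict_le_of_retraction hρ ?_ ?_).trans
    (_root_.encard_nonbacktracking_between_le_two hT hxy hab (ρ u) (ρ v))
  · rintro f ⟨hf, rfl, -⟩ i
    exact hf.mem_gBall hb
  · rintro f ⟨hf, rfl, rfl⟩
    exact ⟨hf.comp_retraction hρ fun i ↦ hf.mem_gBall hb, rfl, rfl⟩

lemma BicycleFree.encard_nonbacktracking_returning_le_two [Finite V] (hG : BicycleFree G r)
    {s : ℕ} (has : a ≤ s) (hsb : s < b) (hb : b ≤ a + r) (u : V) :
    ((Set.Icc a b).domRestrict ''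
      {f | IsNonbacktrackingOn G a b f ∧ f a = u ∧ f s = f b}).encard ≤ 2 := by
  obtain ⟨T, hT, x, y, hxy⟩ := hG.exists_isTree_gBall u
  have := (connected_induce_gBall G u r).nonempty
  obtain ⟨ρ, hρ⟩ := (Subtype.val_injective (p := (· ∈ gBall G u r))).hasLeftInverse
  refine (encard_domRestrict_le_of_retraction hρ ?_ ?_).trans
    (_root_.encard_nonbacktracking_returning_le_two hT hxy has hsb (ρ u))
  · rintro f ⟨hf, rfl, -⟩ i
    exact hf.mem_gBall hb
  · rintro f ⟨hf, rfl, hs⟩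
    exact ⟨hf.comp_retraction hρ fun i ↦ hf.mem_gBall hb, rfl, congrArg ρ hs⟩

lemma encard_immediate_revisits_le_one {i : ℕ} (hia : i ≤ a) (p : ℕ → V) :
    ((Set.Iic (a + 1)).domRestrict ''
      {f | Set.EqOn f p (Set.Iic a) ∧ f i = f (a + 1)}).encard ≤ 1 := by
  rw [Set.encard_le_one_iff_subsingleton]
  rintro _ ⟨f, ⟨hf, hfi⟩, rfl⟩ _ ⟨g, ⟨hg, hgi⟩, rfl⟩
  rw [Set.domRestrict_eq_domRestrict_iff]
  intro j hj
  rcases Nat.le_succ_iff.1 hj with hja | rfl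
  · exact (hf hja).trans (hg hja).symm
  · rw [← hfi, ← hgi, hf hia, hg hia]

-- If the revisited time `i` precedes `a` the endpoint is fixed, otherwise the return time is.
lemma BicycleFree.encard_revisits_le_two [Finite V] (hG : BicycleFree G r) {i : ℕ}
    (hab : a ≤ b) (hb : b ≤ a + r) (hib : i < b) (p : ℕ → V) :
    ((Set.Iic b).domRestrict ''
      {f | IsNonbacktrackingOn G a b f ∧ Set.EqOn f p (Set.Iic a) ∧ f i = f b}).encard ≤ 2 := by
  have glue {f g : ℕ → V} (hf : Set.EqOn f p (Set.Iic a)) (hg : Set.EqOn g p (Set.Iic a))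
      (hfg : Set.EqOn f g (Set.Icc a b)) : Set.EqOn f g (Set.Iic b) :=
    Set.Iic_union_Icc_eq_Iic hab ▸ (hf.trans hg.symm).union hfg
  refine (encard_image_le_encard_image (φ := (Set.Icc a b).domRestrict) ?_).trans ?_
  · rintro f ⟨-, hf, -⟩ g ⟨-, hg, -⟩ hfg
    exact Set.domRestrict_eq_domRestrict_iff.2
      (glue hf hg (Set.domRestrict_eq_domRestrict_iff.1 hfg))
  rcases Nat.lt_or_ge i a with hia | hai
  · refine (Set.encard_le_encard (Set.image_mono ?_)).trans
      (hG.encard_nonbacktracking_between_le_two hab hb (p a) (p i))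
    rintro f ⟨hf, hfp, hfi⟩
    exact ⟨hf, hfp Set.self_mem_Iic, hfi ▸ hfp (Set.mem_Iic.2 hia.le)⟩
  · refine (Set.encard_le_encard (Set.image_mono ?_)).trans
      (hG.encard_nonbacktracking_returning_le_two hai hib hb (p a))
    rintro f ⟨hf, hfp, hfi⟩
    exact ⟨hf, hfp Set.self_mem_Iic, hfi⟩

lemma BicycleFree.encard_revisits_le_min [Finite V] (hG : BicycleFree G r) {i : ℕ}
    (hab : a < b) (hb : b ≤ a + r) (hib : i < b) (p : ℕ → V) :
    ((Set.Iic b).domRestrict ''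
      {f | IsNonbacktrackingOn G a b f ∧ Set.EqOn f p (Set.Iic a) ∧ f i = f b}).encard ≤
      (min 2 r : ℕ) := by
  rcases (show r = 1 ∨ 2 ≤ r by omega) with rfl | hr
  · obtain rfl : b = a + 1 := by omega
    exact (Set.encard_le_encard (Set.image_mono fun f hf ↦ hf.2)).trans
      (encard_immediate_revisits_le_one (by omega) p)
  · rw [min_eq_left hr]
    exact hG.encard_revisits_le_two hab.le hb hib p

end Ball

section Fresh

variable {V : Type*} {f : ℕ → V} {t N : ℕ}

/-- Step `t` of `f` traverses an (undirected) edge that no earlier step traverses. -/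
def IsFresh (f : ℕ → V) (t : ℕ) : Prop :=
  ∀ s < t, s(f s, f (s + 1)) ≠ s(f t, f (t + 1))

/-- The set of fresh steps among the first `N` steps of `f`. -/
def freshSteps (N : ℕ) (f : ℕ → V) : Finset ℕ :=
  (Finset.range N).filter (IsFresh f)

lemma mem_freshSteps : t ∈ freshSteps N f ↔ t < N ∧ IsFresh f t := by
  rw [freshSteps, Finset.mem_filter, Finset.mem_range]

lemma zero_mem_freshSteps (hN : 0 < N) : 0 ∈ freshSteps N f :=
  mem_freshSteps.2 ⟨hN, fun _ hs ↦ absurd hs (Nat.not_lt_zero _)⟩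

lemma IsFresh.ne (h : IsFresh f (t + 1)) : f (t + 2) ≠ f t := fun heq ↦
  h t t.lt_succ_self (by rw [heq, Sym2.eq_swap])

lemma injOn_step_freshSteps (N : ℕ) (f : ℕ → V) :
    Set.InjOn (fun t ↦ s(f t, f (t + 1))) (freshSteps N f) := by
  intro t ht t' ht' heq
  rcases lt_trichotomy t t' with h | h | h
  · exact absurd heq ((mem_freshSteps.1 ht').2 t h)
  · exact h
  · exact absurd heq.symm ((mem_freshSteps.1 ht).2 t' h)

lemma exists_le_eq_of_not_isFresh (h : ¬ IsFresh f t) : ∃ i ≤ t, f i = f (t + 1) := by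
  simp only [IsFresh, not_forall, not_not] at h
  obtain ⟨s, hs, heq⟩ := h
  rcases Sym2.eq_iff.1 heq with ⟨-, h⟩ | ⟨h, -⟩
  exacts [⟨s + 1, hs, h⟩, ⟨s, hs.le, h⟩]

-- The first visit to a vertex is at time `0` or at the end of a fresh step.
lemma exists_revisit_of_not_isFresh (htN : t < N) (h : ¬ IsFresh f t) :
    ∃ i ∈ insert 0 ((freshSteps N f).image Nat.succ), i < t + 1 ∧ f i = f (t + 1) := by
  have hvisit : ∃ i, f i = f (t + 1) := ⟨t + 1, rfl⟩
  obtain ⟨i, hi, hmin⟩ : ∃ i, f i = f (t + 1) ∧ ∀ l, f l = f (t + 1) → i ≤ l :=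
    ⟨Nat.find hvisit, Nat.find_spec hvisit, fun _ ↦ Nat.find_min' hvisit⟩
  obtain ⟨i', hi't, hi'⟩ := exists_le_eq_of_not_isFresh h
  have hit := hmin i' hi'
  refine ⟨i, ?_, by omega, hi⟩
  cases i with
  | zero => exact Finset.mem_insert_self _ _
  | succ j =>
    refine Finset.mem_insert_of_mem (Finset.mem_image_of_mem _ (mem_freshSteps.2 ⟨by omega, ?_⟩))
    by_contra hj
    obtain ⟨l, hlj, hl⟩ := exists_le_eq_of_not_isFresh hj
    have := hmin l (hl.trans hi)
    omega

end Fresh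

/-- The number of prefixes `f 0, …, f t` of the sequences `f` in `S`. -/
def prefixCount {V : Type*} (S : Finset (ℕ → V)) (t : ℕ) : ℕ :=
  (S.image (Set.Iic t).domRestrict).card

section PrefixCount

variable {V : Type*} {G : SimpleGraph V} {S : Finset (ℕ → V)} {F : Finset ℕ} {a b d r t N q K : ℕ}

lemma prefixCount_image {α : Type*} (A : Finset α) {φ : α → ℕ → V}
    (hφ : Function.Injective fun x ↦ (Set.Iic t).domRestrict (φ x)) :
    prefixCount (A.image φ) t = A.card := by
  rw [prefixCount, Finset.image_image]
  exact Finset.card_image_of_injective A hφ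

lemma prefixCount_zero_le [Fintype V] (S : Finset (ℕ → V)) :
    prefixCount S 0 ≤ Fintype.card V := by
  refine Finset.card_le_card_of_injOn (fun p ↦ p ⟨0, Set.self_mem_Iic⟩)
    (fun _ _ ↦ Finset.mem_univ _) fun p _ p' _ hpp' ↦ funext ?_
  rintro ⟨i, hi⟩
  obtain rfl : i = 0 := Nat.le_zero.1 hi
  exact hpp'

lemma prefixCount_succ_le {M : ℕ} {A : (ℕ → V) → Finset V} (hA : ∀ p ∈ S, (A p).card ≤ M)
    (hS : ∀ p ∈ S, ∀ f ∈ S, Set.EqOn f p (Set.Iic t) → f (t + 1) ∈ A p) :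
    prefixCount S (t + 1) ≤ prefixCount S t * M := by
  refine card_image_le_card_image_mul fun p hp ↦ le_trans ?_ (hA p hp)
  refine Finset.card_le_card_of_injOn (fun z ↦ z ⟨t + 1, Set.self_mem_Iic⟩) ?_ ?_
  · intro z hz
    obtain ⟨f, hf, rfl⟩ := Finset.mem_image.1 hz
    obtain ⟨hfS, hfp⟩ := Finset.mem_filter.1 hf
    exact hS p hp f hfS (Set.domRestrict_eq_domRestrict_iff.1 hfp)
  · intro z hz z' hz' hzz'
    obtain ⟨f, hf, rfl⟩ := Finset.mem_image.1 hz
    obtain ⟨g, hg, rfl⟩ := Finset.mem_image.1 hz'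
    have hfg := Set.domRestrict_eq_domRestrict_iff.1
      ((Finset.mem_filter.1 hf).2.trans (Finset.mem_filter.1 hg).2.symm)
    rw [Set.domRestrict_eq_domRestrict_iff]
    intro i hi
    rcases Nat.le_succ_iff.1 hi with hit | rfl
    exacts [hfg hit, hzz']

lemma prefixCount_one_le [G.LocallyFinite] (hdeg : ∀ v, G.degree v ≤ d)
    (hS : ∀ f ∈ S, G.Adj (f 0) (f 1)) : prefixCount S 1 ≤ prefixCount S 0 * d := by
  refine prefixCount_succ_le (A := fun p ↦ G.neighborFinset (p 0)) (fun p _ ↦ hdeg (p 0)) ?_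
  intro p _ f hf hfp
  rw [SimpleGraph.mem_neighborFinset, ← hfp Set.self_mem_Iic]
  exact hS f hf

lemma prefixCount_add_two_le [G.LocallyFinite] (hdeg : ∀ v, G.degree v ≤ d)
    (hS : ∀ f ∈ S, IsNonbacktrackingOn G t (t + 2) f) :
    prefixCount S (t + 2) ≤ prefixCount S (t + 1) * (d - 1) := by
  refine prefixCount_succ_le (A := fun p ↦ (G.neighborFinset (p (t + 1))).erase (p t)) ?_ ?_
  · intro p hp
    have hadj : G.Adj (p t) (p (t + 1)) := (hS p hp).adj t le_rfl (by omega)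
    rw [Finset.card_erase_of_mem ((SimpleGraph.mem_neighborFinset _ _ _).2 hadj.symm)]
    exact Nat.sub_le_sub_right (hdeg _) 1
  · intro p _ f hf hfp
    rw [Finset.mem_erase, SimpleGraph.mem_neighborFinset, ← hfp Set.self_mem_Iic,
      ← hfp (Set.mem_Iic.2 t.le_succ)]
    exact ⟨(hS f hf).ne t le_rfl le_rfl, (hS f hf).adj (t + 1) (by omega) (by omega)⟩

lemma BicycleFree.prefixCount_le_of_revisit [Finite V] (hG : BicycleFree G r) (hab : a < b)
    (hb : b ≤ a + r) (hS : ∀ f ∈ S, IsNonbacktrackingOn G a b f) {R : Finset ℕ}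
    (hR : ∀ f ∈ S, ∃ i ∈ R, i < b ∧ f i = f b) :
    prefixCount S b ≤ prefixCount S a * (R.card * min 2 r) := by
  refine card_image_le_card_image_mul fun p _ ↦ ?_
  have hcover : (S.filter fun f ↦ (Set.Iic a).domRestrict f = (Set.Iic a).domRestrict p).image
      (Set.Iic b).domRestrict ⊆ (R.filter (· < b)).biUnion fun i ↦ (S.filter fun f ↦
        Set.EqOn f p (Set.Iic a) ∧ f i = f b).image (Set.Iic b).domRestrict := by
    intro z hz
    obtain ⟨f, hf, rfl⟩ := Finset.mem_image.1 hz
    obtain ⟨hfS, hfp⟩ := Finset.mem_filter.1 hf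
    obtain ⟨i, hiR, hib, hi⟩ := hR f hfS
    exact Finset.mem_biUnion.2 ⟨i, Finset.mem_filter.2 ⟨hiR, hib⟩, Finset.mem_image_of_mem _
      (Finset.mem_filter.2 ⟨hfS, Set.domRestrict_eq_domRestrict_iff.1 hfp, hi⟩)⟩
  refine ((Finset.card_le_card hcover).trans
    (Finset.card_biUnion_le_card_mul _ _ (min 2 r) fun i hi ↦ ?_)).trans
    (Nat.mul_le_mul_right _ (Finset.card_filter_le _ _))
  rw [← Nat.cast_le (α := ℕ∞), ← Set.encard_coe_eq_coe_finsetCard, Finset.coe_image]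
  refine (Set.encard_le_encard (Set.image_mono fun f hf ↦ ?_)).trans
    (hG.encard_revisits_le_min hab hb (Finset.mem_filter.1 hi).2 p)
  obtain ⟨hfS, hfp, hfi⟩ := Finset.mem_filter.1 hf
  exact ⟨hS f hfS, hfp, hfi⟩

-- A fresh step costs a factor `d - 1`. At a stale step the count is restarted from the beginning of
-- the window, which costs the factor `(#F + 1) * min 2 r` however many stale steps there are.
lemma BicycleFree.prefixCount_le_of_le_add [Finite V] [G.LocallyFinite] (hG : BicycleFree G r)
    (hr : 1 ≤ r) (hd : 2 ≤ d) (hdeg : ∀ v, G.degree v ≤ d)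
    (hF : ∀ f ∈ S, freshSteps N f = F) (hwalk : ∀ f ∈ S, ∀ i < N, G.Adj (f i) (f (i + 1)))
    (ha : 1 ≤ a) (hab : a ≤ b) (hb : b ≤ a + r) (hbN : b ≤ N)
    (hS : ∀ f ∈ S, IsNonbacktrackingOn G a b f) :
    prefixCount S b ≤
      prefixCount S a * ((F.card + 1) * min 2 r * (d - 1) ^ (F ∩ Finset.Ico a b).card) := by
  induction b, hab using Nat.le_induction with
  | base =>
    rw [Finset.Ico_self, Finset.inter_empty, Finset.card_empty, pow_zero, mul_one]
    exact Nat.le_mul_of_pos_right _ (Nat.mul_pos (by omega) (by omega))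
  | succ b hab ih =>
    by_cases hfresh : b ∈ F
    · have hstep : prefixCount S (b + 1) ≤ prefixCount S b * (d - 1) := by
        obtain ⟨t, rfl⟩ := Nat.exists_eq_add_of_le' (ha.trans hab)
        refine prefixCount_add_two_le hdeg fun f hf ↦ ⟨fun i _ hi ↦ hwalk f hf i (by omega), ?_⟩
        intro i hi hit
        obtain rfl : i = t := by omega
        exact (mem_freshSteps.1 (hF f hf ▸ hfresh)).2.ne
      rw [← Finset.insert_Ico_right_eq_Ico_add_one hab, Finset.inter_insert_of_mem hfresh,
        Finset.card_insert_of_notMem (by simp), pow_succ]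
      calc prefixCount S (b + 1) ≤ prefixCount S b * (d - 1) := hstep
        _ ≤ _ := Nat.mul_le_mul_right _
            (ih (by omega) (by omega) fun f hf ↦ (hS f hf).mono le_rfl (by omega))
        _ = _ := by ring
    · have hR : (insert 0 (F.image Nat.succ)).card ≤ F.card + 1 :=
        (Finset.card_insert_le _ _).trans (Nat.add_le_add_right Finset.card_image_le 1)
      calc prefixCount S (b + 1)
          ≤ prefixCount S a * ((insert 0 (F.image Nat.succ)).card * min 2 r) :=
            hG.prefixCount_le_of_revisit (by omega) hb hS fun f hf ↦ hF f hf ▸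
              exists_revisit_of_not_isFresh hbN fun h ↦
                hfresh (hF f hf ▸ mem_freshSteps.2 ⟨hbN, h⟩)
        _ ≤ prefixCount S a * ((F.card + 1) * min 2 r) := by gcongr
        _ ≤ _ := Nat.mul_le_mul_left _ (Nat.le_mul_of_pos_right _ (Nat.pow_pos (by omega)))

lemma BicycleFree.prefixCount_le_of_le_add_mul [Finite V] [G.LocallyFinite] (hG : BicycleFree G r)
    (hr : 1 ≤ r) (hd : 2 ≤ d) (hdeg : ∀ v, G.degree v ≤ d)
    (hF : ∀ f ∈ S, freshSteps N f = F) (hwalk : ∀ f ∈ S, ∀ i < N, G.Adj (f i) (f (i + 1)))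
    (ha : 1 ≤ a) (hab : a ≤ b) (hb : b ≤ a + q * r) (hbN : b ≤ N)
    (hS : ∀ f ∈ S, IsNonbacktrackingOn G a b f) :
    prefixCount S b ≤
      prefixCount S a * (((F.card + 1) * min 2 r) ^ q * (d - 1) ^ (F ∩ Finset.Ico a b).card) := by
  induction q generalizing b with
  | zero =>
    obtain rfl : b = a := by omega
    simp
  | succ q ih =>
    rw [Nat.succ_mul] at hb
    obtain ⟨c, hac, hcb, hcq, hbc⟩ : ∃ c, a ≤ c ∧ c ≤ b ∧ c ≤ a + q * r ∧ b ≤ c + r :=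
      ⟨min b (a + q * r), by omega, by omega, by omega, by omega⟩
    calc prefixCount S b
        ≤ prefixCount S c *
          ((F.card + 1) * min 2 r * (d - 1) ^ (F ∩ Finset.Ico c b).card) :=
          hG.prefixCount_le_of_le_add hr hd hdeg hF hwalk (by omega) hcb hbc hbN
            fun f hf ↦ (hS f hf).mono hac le_rfl
      _ ≤ _ := Nat.mul_le_mul_right _ (ih hac hcq (by omega)
            fun f hf ↦ (hS f hf).mono le_rfl hcb)
      _ = _ := by rw [← card_inter_Ico_add_card_inter_Ico F hac hcb]; ring

lemma BicycleFree.prefixCount_two_mul_le [Fintype V] [G.LocallyFinite] (hG : BicycleFree G r)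
    (hr : 1 ≤ r) (hd : 2 ≤ d) (hdeg : ∀ v, G.degree v ≤ d) (hK : 1 ≤ K) (hKq : K ≤ q * r)
    (hF : ∀ f ∈ S, freshSteps (2 * K) f = F) (hS : ∀ f ∈ S, IsNonbacktrackingOn G 0 K f)
    (hS' : ∀ f ∈ S, IsNonbacktrackingOn G K (2 * K) f) :
    prefixCount S (2 * K) ≤ Fintype.card V *
      (((F.card + 1) * min 2 r) ^ (2 * q) * (d * (d - 1) ^ (F ∩ Finset.Ico 1 (2 * K)).card)) := by
  have hwalk : ∀ f ∈ S, ∀ i < 2 * K, G.Adj (f i) (f (i + 1)) := fun f hf i hi ↦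
    (lt_or_ge i K).elim ((hS f hf).adj i i.zero_le) fun hKi ↦ (hS' f hf).adj i hKi hi
  calc prefixCount S (2 * K)
      ≤ prefixCount S K *
        (((F.card + 1) * min 2 r) ^ q * (d - 1) ^ (F ∩ Finset.Ico K (2 * K)).card) :=
        hG.prefixCount_le_of_le_add_mul hr hd hdeg hF hwalk hK (by omega) (by omega) le_rfl hS'
    _ ≤ prefixCount S 1 *
          (((F.card + 1) * min 2 r) ^ q * (d - 1) ^ (F ∩ Finset.Ico 1 K).card) * _ :=
        Nat.mul_le_mul_right _ (hG.prefixCount_le_of_le_add_mul hr hd hdeg hF hwalk le_rfl hK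
          (by omega) (by omega) fun f hf ↦ (hS f hf).mono zero_le_one le_rfl)
    _ ≤ Fintype.card V * d * _ * _ := by
        gcongr
        exact (prefixCount_one_le hdeg fun f hf ↦ hwalk f hf 0 (by omega)).trans
          (Nat.mul_le_mul_right _ (prefixCount_zero_le S))
    _ = _ := by
        rw [← card_inter_Ico_add_card_inter_Ico F hK (by omega : K ≤ 2 * K)]
        ring

lemma card_image_freshSteps_le (S : Finset (ℕ → V)) (N : ℕ) :
    (S.image (freshSteps N)).card ≤ 2 ^ N := by
  have hsub : S.image (freshSteps N) ⊆ (Finset.range N).powerset := by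
    intro F hF
    obtain ⟨f, -, rfl⟩ := Finset.mem_image.1 hF
    exact Finset.mem_powerset.2 (Finset.filter_subset _ _)
  simpa using Finset.card_le_card hsub

lemma BicycleFree.prefixCount_two_mul_le_of_card_freshSteps_le [Fintype V] [G.LocallyFinite]
    (hG : BicycleFree G r) (hr : 1 ≤ r) (hd : 3 ≤ d) (hdeg : ∀ v, G.degree v ≤ d)
    (hK : 1 ≤ K) (hKq : K ≤ q * r) (hfresh : ∀ f ∈ S, (freshSteps (2 * K) f).card ≤ K)
    (hS : ∀ f ∈ S, IsNonbacktrackingOn G 0 K f)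
    (hS' : ∀ f ∈ S, IsNonbacktrackingOn G K (2 * K) f) :
    prefixCount S (2 * K) ≤
      4 ^ K * (Fintype.card V * (((K + 1) * min 2 r) ^ (2 * q) * (d - 1) ^ (K + 1))) := by
  have hfiber : ∀ f₀ ∈ S, prefixCount (S.filter fun f ↦ freshSteps (2 * K) f =
      freshSteps (2 * K) f₀) (2 * K) ≤
        Fintype.card V * (((K + 1) * min 2 r) ^ (2 * q) * (d - 1) ^ (K + 1)) := by
    intro f₀ hf₀
    have hcard := hfresh f₀ hf₀
    have hzero : (freshSteps (2 * K) f₀ ∩ Finset.Ico 1 (2 * K)).card <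
        (freshSteps (2 * K) f₀).card :=
      Finset.card_lt_card (Finset.ssubset_iff_of_subset Finset.inter_subset_left |>.2
        ⟨0, zero_mem_freshSteps (by omega), by simp⟩)
    have hsq : d ≤ (d - 1) ^ 2 := by
      obtain ⟨e, rfl⟩ := Nat.exists_eq_add_of_le hd
      rw [show 3 + e - 1 = e + 2 by omega]
      nlinarith
    calc _ ≤ _ := hG.prefixCount_two_mul_le hr (by omega) hdeg hK hKq
          (fun f hf ↦ (Finset.mem_filter.1 hf).2) (fun f hf ↦ hS f (Finset.mem_filter.1 hf).1)
          fun f hf ↦ hS' f (Finset.mem_filter.1 hf).1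
      _ ≤ _ := by
          gcongr
          calc _ ≤ (d - 1) ^ 2 * (d - 1) ^ (freshSteps (2 * K) f₀ ∩ Finset.Ico 1 (2 * K)).card :=
                Nat.mul_le_mul_right _ hsq
            _ ≤ (d - 1) ^ (K + 1) := by
                rw [← pow_add]
                exact Nat.pow_le_pow_right (by omega) (by omega)
  calc prefixCount S (2 * K) ≤ (S.image (freshSteps (2 * K))).card * _ :=
        card_image_le_card_image_mul hfiber
    _ ≤ 4 ^ K * _ := Nat.mul_le_mul_right _
        ((card_image_freshSteps_le S _).trans_eq (pow_mul 2 2 K))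

end PrefixCount

section Hike

variable {V : Type*} {G : SimpleGraph V} {K d r q : ℕ} {f : Fin (2 * K + 1) → V}

/-- A `k`-hike without the requirement of being closed: a walk of length `2k` in which every step
except possibly the `(k+1)`-st is non-backtracking. -/
def IsOpenHike (G : SimpleGraph V) (k : ℕ) (f : Fin (2 * k + 1) → V) : Prop :=
  (∀ (i : ℕ) (h : i < 2 * k), G.Adj (f ⟨i, by omega⟩) (f ⟨i + 1, by omega⟩)) ∧
  ∀ (i : ℕ) (h1 : 1 ≤ i) (h2 : i < 2 * k), i ≠ k → f ⟨i + 1, by omega⟩ ≠ f ⟨i - 1, by omega⟩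

lemma IsHike.isOpenHike (h : IsHike G K f) : IsOpenHike G K f :=
  ⟨h.1, h.2.2⟩

/-- The extension of a finite sequence to all of `ℕ` that repeats its last term forever. -/
def clampExtend {m : ℕ} (f : Fin (m + 1) → V) (i : ℕ) : V :=
  f (Fin.clamp i m)

lemma clampExtend_apply {m : ℕ} (f : Fin (m + 1) → V) {i : ℕ} (hi : i < m + 1) :
    clampExtend f i = f ⟨i, hi⟩ :=
  congrArg f (Fin.ext ((Fin.coe_clamp i m).trans (min_eq_left (Nat.le_of_lt_succ hi))))

lemma domRestrict_clampExtend_injective (m : ℕ) :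
    Function.Injective fun f : Fin (m + 1) → V ↦ (Set.Iic m).domRestrict (clampExtend f) := by
  intro f g hfg
  funext i
  have h := Set.domRestrict_eq_domRestrict_iff.1 hfg (Nat.le_of_lt_succ i.2)
  rwa [clampExtend_apply f i.2, clampExtend_apply g i.2] at h

lemma IsOpenHike.isNonbacktrackingOn_clampExtend (h : IsOpenHike G K f) {a b : ℕ}
    (hb : b ≤ 2 * K) (hK : K ≤ a ∨ b ≤ K) : IsNonbacktrackingOn G a b (clampExtend f) := by
  refine ⟨fun i _ hib ↦ ?_, fun i hai hib ↦ ?_⟩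
  · rw [clampExtend_apply f (by omega), clampExtend_apply f (by omega)]
    exact h.1 i (by omega)
  · rw [clampExtend_apply f (by omega), clampExtend_apply f (by omega)]
    exact h.2 (i + 1) (by omega) (by omega) (by omega)

lemma IsSingletonFree.card_freshSteps_le [DecidableEq V] (h : IsSingletonFree K f) :
    (freshSteps (2 * K) (clampExtend f)).card ≤ K := by
  let step : Fin (2 * K) → Sym2 V := fun i ↦ s(f ⟨i.1, by omega⟩, f ⟨i.1 + 1, by omega⟩)
  have htwice : 2 * (Finset.univ.image step).card ≤ 2 * K := by
    refine (Finset.mul_card_image_le_card Finset.univ 2 fun e he ↦ ?_).trans_eq (by simp)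
    obtain ⟨i, -, rfl⟩ := Finset.mem_image.1 he
    have hpos : 0 < edgeCount K f (step i) := Finset.card_pos.2 ⟨i, by simp [step]⟩
    have hne := h (step i)
    change 2 ≤ edgeCount K f (step i)
    omega
  have hfresh : (freshSteps (2 * K) (clampExtend f)).card ≤ (Finset.univ.image step).card := by
    refine Finset.card_le_card_of_injOn _ (fun t ht ↦ ?_) (injOn_step_freshSteps _ _)
    have htK := (mem_freshSteps.1 ht).1
    refine Finset.mem_coe.2 (Finset.mem_image.2 ⟨⟨t, htK⟩, Finset.mem_univ _, ?_⟩)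
    rw [clampExtend_apply f (by omega), clampExtend_apply f (by omega)]
  omega

lemma BicycleFree.ncard_isOpenHike_le [Fintype V] [DecidableEq V] [G.LocallyFinite]
    (hG : BicycleFree G r) (hr : 1 ≤ r) (hd : 3 ≤ d) (hdeg : ∀ v, G.degree v ≤ d)
    (hKq : K ≤ q * r) :
    {f : Fin (2 * K + 1) → V | IsOpenHike G K f ∧ IsSingletonFree K f}.ncard ≤
      4 ^ K * (Fintype.card V * (((K + 1) * min 2 r) ^ (2 * q) * (d - 1) ^ (K + 1))) := by
  set S := {f : Fin (2 * K + 1) → V | IsOpenHike G K f ∧ IsSingletonFree K f}.toFinite.toFinset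
  have hcount : {f : Fin (2 * K + 1) → V | IsOpenHike G K f ∧ IsSingletonFree K f}.ncard =
      prefixCount (S.image clampExtend) (2 * K) := by
    rw [prefixCount_image S (domRestrict_clampExtend_injective _), Set.ncard_eq_toFinset_card]
  have hmem : ∀ {P : (ℕ → V) → Prop}, (∀ f, IsOpenHike G K f → IsSingletonFree K f →
      P (clampExtend f)) → ∀ f ∈ S.image clampExtend, P f := by
    intro P hP f hf
    obtain ⟨g, hg, rfl⟩ := Finset.mem_image.1 hf
    obtain ⟨hopen, hfree⟩ := (Set.Finite.mem_toFinset _).1 hg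
    exact hP g hopen hfree
  rw [hcount]
  rcases Nat.eq_zero_or_pos K with rfl | hK
  · have hpos : 0 < 4 ^ 0 * (((0 + 1) * min 2 r) ^ (2 * q) * (d - 1) ^ (0 + 1)) := by
      have : 0 < d - 1 := by omega
      have : 0 < min 2 r := by omega
      positivity
    exact ((prefixCount_zero_le _).trans (Nat.le_mul_of_pos_right _ hpos)).trans_eq (by ring)
  · exact hG.prefixCount_two_mul_le_of_card_freshSteps_le hr hd hdeg hK hKq
      (hmem fun f _ hf ↦ hf.card_freshSteps_le)
      (hmem fun f hf _ ↦ hf.isNonbacktrackingOn_clampExtend (by omega) (Or.inr le_rfl))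
      (hmem fun f hf _ ↦ hf.isNonbacktrackingOn_clampExtend le_rfl (Or.inl le_rfl))

end Hike

section Numerics

lemma add_one_mul_four_pow_le_nine_pow (p : ℕ) : (p + 1) * 4 ^ p ≤ 9 ^ p := by
  induction p with
  | zero => simp
  | succ p ih =>
    calc (p + 1 + 1) * 4 ^ (p + 1) ≤ 9 * ((p + 1) * 4 ^ p) := by
          rw [pow_succ', ← mul_assoc, ← mul_assoc]
          exact Nat.mul_le_mul_right _ (by omega)
      _ ≤ 9 * 9 ^ p := Nat.mul_le_mul_left 9 ih
      _ = 9 ^ (p + 1) := (pow_succ' 9 p).symm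

lemma mul_four_pow_le_pow {k p r : ℕ} (hr : 3 ≤ r) (hkr : k ≤ (p + 1) * r) :
    k * 4 ^ p ≤ r ^ (2 * p + 1) :=
  calc k * 4 ^ p ≤ (p + 1) * r * 4 ^ p := Nat.mul_le_mul_right _ hkr
    _ = (p + 1) * 4 ^ p * r := by ring
    _ ≤ 9 ^ p * r := Nat.mul_le_mul_right _ (add_one_mul_four_pow_le_nine_pow p)
    _ = (3 ^ 2) ^ p * r := by norm_num
    _ ≤ (r ^ 2) ^ p * r := by gcongr
    _ = r ^ (2 * p + 1) := by ring

lemma mul_min_two_pow_le {k p r : ℕ} (hpk : p * r < k) (hkp : k ≤ (p + 1) * r) :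
    ((k * min 2 r : ℕ) : ℝ) ^ (2 * (p + 1)) ≤ 4 * ((r : ℝ) * k) ^ (1 + 2 * (k : ℝ) / r) := by
  have hk : 0 < k := Nat.zero_lt_of_lt hpk
  have hr : 0 < r := Nat.pos_of_mul_pos_left (hk.trans_le hkp)
  have hr0 : (0 : ℝ) < r := Nat.cast_pos.2 hr
  have hbase : (1 : ℝ) ≤ (r : ℝ) * k := by exact_mod_cast Nat.mul_pos hr hk
  rcases le_or_gt r 2 with hr2 | hr3
  · have hexp : ((2 * (p + 1) : ℕ) : ℝ) ≤ 1 + 2 * (k : ℝ) / r := by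
      have hcast : (r : ℝ) * (2 * p + 1) ≤ 2 * k := by
        have hnat : r * (2 * p + 1) ≤ 2 * k := by nlinarith
        exact_mod_cast hnat
      rw [← sub_le_iff_le_add', le_div_iff₀ hr0]
      push_cast
      linarith
    calc ((k * min 2 r : ℕ) : ℝ) ^ (2 * (p + 1))
        = ((r : ℝ) * k) ^ ((2 * (p + 1) : ℕ) : ℝ) := by
          rw [min_eq_right hr2, Nat.cast_mul, mul_comm, Real.rpow_natCast]
      _ ≤ ((r : ℝ) * k) ^ (1 + 2 * (k : ℝ) / r) := Real.rpow_le_rpow_of_exponent_le hbase hexp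
      _ ≤ _ := le_mul_of_one_le_left (by positivity) (by norm_num)
  · have hexp : ((2 * p + 1 : ℕ) : ℝ) ≤ 1 + 2 * (k : ℝ) / r := by
      have hcast : (p : ℝ) * r ≤ k := by exact_mod_cast hpk.le
      rw [← sub_le_iff_le_add', le_div_iff₀ hr0]
      push_cast
      linarith
    have hnat : ((k * 4 ^ p : ℕ) : ℝ) ≤ (r ^ (2 * p + 1) : ℕ) :=
      Nat.cast_le.2 (mul_four_pow_le_pow hr3 hkp)
    calc ((k * min 2 r : ℕ) : ℝ) ^ (2 * (p + 1))
        = 4 * ((k * 4 ^ p : ℕ) * (k : ℝ) ^ (2 * p + 1)) := by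
          rw [min_eq_left hr3.le, show (4 : ℕ) = 2 ^ 2 by norm_num, ← pow_mul]
          push_cast
          ring
      _ ≤ 4 * ((r ^ (2 * p + 1) : ℕ) * (k : ℝ) ^ (2 * p + 1)) := by gcongr
      _ = 4 * ((r : ℝ) * k) ^ ((2 * p + 1 : ℕ) : ℝ) := by
          rw [Real.rpow_natCast, mul_pow, Nat.cast_pow]
      _ ≤ _ := by gcongr

lemma two_rpow_logb_mul_sqrt_pow {n ρ D : ℝ} {k : ℕ} (hn : 0 < n) (hρ : 0 < ρ) (hD : 0 ≤ D)
    (hk : 1 ≤ k) :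
    ((2 : ℝ) ^ (1 + Real.logb 2 (n * ρ * k) / (2 * k) + Real.logb 2 (ρ * k) / ρ)
        * Real.sqrt D) ^ (2 * k) = 4 ^ k * n * (ρ * k) ^ (1 + 2 * (k : ℝ) / ρ) * D ^ k := by
  have : (0 : ℝ) < k := Nat.cast_pos.2 hk
  have hexp : (1 + Real.logb 2 (n * ρ * k) / (2 * k) + Real.logb 2 (ρ * k) / ρ) *
      ((2 * k : ℕ) : ℝ) =
        ((2 * k : ℕ) : ℝ) + Real.logb 2 (n * ρ * k) + Real.logb 2 (ρ * k) * (2 * k / ρ) := by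
    push_cast
    field_simp
  have hpow : ((2 : ℝ) ^ (1 + Real.logb 2 (n * ρ * k) / (2 * k) + Real.logb 2 (ρ * k) / ρ)) ^
      (2 * k) = 2 ^ (2 * k) * (n * ρ * k) * (ρ * k) ^ (2 * k / ρ) := by
    rw [← Real.rpow_natCast, ← Real.rpow_mul zero_le_two, hexp, Real.rpow_add two_pos,
      Real.rpow_add two_pos, Real.rpow_mul zero_le_two, Real.rpow_natCast,
      Real.rpow_logb two_pos (by norm_num) (by positivity),
      Real.rpow_logb two_pos (by norm_num) (by positivity)]
  rw [mul_pow, hpow, pow_mul √D, Real.sq_sqrt hD, Real.rpow_add (by positivity), Real.rpow_one,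
    pow_mul]
  ring

end Numerics

theorem stmt9_general {V : Type*} [Fintype V] [DecidableEq V] {d r k : ℕ} (hd : 3 ≤ d)
    (hr : 1 ≤ r) (hk : 1 ≤ k) (G : SimpleGraph V) [G.LocallyFinite]
    (hdeg : ∀ v, G.degree v ≤ d) (hbf : BicycleFree G r) :
    ({f : Fin (2 * (k - 1) + 1) → V |
        IsOpenHike G (k - 1) f ∧ IsSingletonFree (k - 1) f}.ncard : ℝ)
      ≤ ((2 : ℝ) ^ (1 + Real.logb 2 ((Fintype.card V : ℝ) * r * k) / (2 * k)
          + Real.logb 2 ((r : ℝ) * k) / r) * Real.sqrt ((d : ℝ) - 1)) ^ (2 * k) := by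
  obtain ⟨K, rfl⟩ := Nat.exists_eq_add_of_le' hk
  rw [Nat.add_sub_cancel]
  rcases isEmpty_or_nonempty V with hV | hV
  · have hnone : {f : Fin (2 * K + 1) → V | IsOpenHike G K f ∧ IsSingletonFree K f} = ∅ :=
      Set.eq_empty_of_isEmpty _
    rw [hnone, Set.ncard_empty, Nat.cast_zero]
    positivity
  have hKr : K < (K / r + 1) * r := (Nat.lt_div_mul_add hr).trans_eq (Nat.succ_mul _ _).symm
  have hcount := hbf.ncard_isOpenHike_le hr hd hdeg hKr.le
  have hnum := mul_min_two_pow_le (Nat.lt_succ_of_le (Nat.div_mul_le_self K r)) hKr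
  have hD : ((d - 1 : ℕ) : ℝ) = (d : ℝ) - 1 := Nat.cast_pred (by omega)
  rw [two_rpow_logb_mul_sqrt_pow (Nat.cast_pos.2 Fintype.card_pos) (Nat.cast_pos.2 hr)
    (hD ▸ Nat.cast_nonneg _) hk, ← hD]
  calc _ ≤ (4 ^ K * (Fintype.card V * ((((K + 1) * min 2 r : ℕ) : ℝ) ^ (2 * (K / r + 1)) *
            ((d - 1 : ℕ) : ℝ) ^ (K + 1))) : ℝ) := by exact_mod_cast hcount
    _ ≤ 4 ^ K * (Fintype.card V * (4 * ((r : ℝ) * (K + 1 : ℕ)) ^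
          (1 + 2 * ((K + 1 : ℕ) : ℝ) / r) * ((d - 1 : ℕ) : ℝ) ^ (K + 1))) := by gcongr
    _ = _ := by ring

/-- First counting bound for singleton-free `(k-1)`-hikes in a `d`-regular graph that is
bicycle-free at radius `r`. -/
theorem stmt9 {n d r k : ℕ} (hd : 3 ≤ d) (hr : 1 ≤ r) (hk : 1 ≤ k)
    (G : SimpleGraph (Fin n)) (hreg : G.IsRegularOfDegree d) (hbf : BicycleFree G r) :
    ({f : Fin (2 * (k - 1) + 1) → Fin n |
        IsHike G (k - 1) f ∧ IsSingletonFree (k - 1) f}.ncard : ℝ)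
      ≤ ((2 : ℝ) ^ (1 + Real.logb 2 ((n : ℝ) * r * k) / (2 * k) + Real.logb 2 ((r : ℝ) * k) / r)
          * Real.sqrt ((d : ℝ) - 1)) ^ (2 * k) := by
  refine (Nat.cast_le.2 (Set.ncard_le_ncard fun f hf ↦ ?_)).trans
    (Fintype.card_fin n ▸ stmt9_general hd hr hk G (fun v ↦ (hreg v).le) hbf)
  exact ⟨hf.1.isOpenHike, hf.2⟩
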